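/- Let p > 1, and for each integer n ≥ 2 let I_{n,p} denote the infimum of P_{n,p}(ℓ_1,…,ℓ_n) := (1/(p−1)) Σ_{i=1}^{n−1} (ℓ_i^{1−p} + ℓ_{i+1}^{1−p} − 2(ℓ_i+ℓ_{i+1})^{1−p}) over all (ℓ_1,…,ℓ_n) ∈ (0,∞)^n with ℓ_1+…+ℓ_n = 1. Then lim_{n→∞} I_{n,p}/n^p = (2/(p−1))·(1 − 2^{1−p}). -/

import Mathlib

/-!
The two bounds `C * m ^ p ≤ Inp p (m + 1) ≤ C * m * (m + 1) ^ (p - 1)`, where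
`C = 2 / (p - 1) * (1 - 2 ^ (1 - p))` and `m ≥ 1`, squeeze the quotient.

The upper bound is the value at equal lengths `ℓ i = 1 / (m + 1)`. The lower bound applies
convexity of `x ↦ x ^ q`, `q = 1 - p < 0`, twice. For a single pair it gives
`a ^ q + b ^ q ≥ 2 * ((a + b) / 2) ^ q`, so each summand is at least
`2 * (2 ^ (-q) - 1) * (a + b) ^ q` (`pair_lower`). The `m` sums `ℓ i + ℓ (i + 1)` add up to at
most `2`, so by Jensen the sum of their `q`-th powers is at least `m * (2 / m) ^ q`
(`jensen_rpow`).
-/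

open Finset Filter Topology

/-- The infimum `I_{n,p}` of `P_{n,p}` over positive `ℓ_1,…,ℓ_n` summing to 1. -/
noncomputable def Inp (p : ℝ) (n : ℕ) : ℝ :=
  sInf {y : ℝ | ∃ ℓ : ℕ → ℝ, (∀ i ∈ Finset.range n, 0 < ℓ i) ∧
    (∑ i ∈ Finset.range n, ℓ i) = 1 ∧
    y = (1 / (p - 1)) * ∑ i ∈ Finset.range (n - 1),
      (ℓ i ^ (1 - p) + ℓ (i + 1) ^ (1 - p) - 2 * (ℓ i + ℓ (i + 1)) ^ (1 - p))}

/-- The graph of `x ↦ x ^ q`, `q ≤ 0`, lies above its tangent line at `t`. -/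
lemma tangent_rpow {q x t : ℝ} (hq : q ≤ 0) (hx : 0 < x) (ht : 0 < t) :
    t ^ q * (1 + q * (x / t - 1)) ≤ x ^ q := by
  have hy : 0 < x / t := div_pos hx ht
  have h1 : 1 + q * (x / t - 1) ≤ (x / t) ^ q := by
    rw [Real.rpow_def_of_pos hy]
    have h2 := Real.add_one_le_exp (Real.log (x / t) * q)
    have h3 := mul_le_mul_of_nonpos_left (Real.log_le_sub_one_of_pos hy) hq
    linarith
  calc t ^ q * (1 + q * (x / t - 1)) ≤ t ^ q * (x / t) ^ q := by gcongr
    _ = x ^ q := by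
      rw [← Real.mul_rpow ht.le hy.le, mul_div_cancel₀ _ ht.ne']

/-- Jensen's inequality for `x ↦ x ^ q` with `q ≤ 0`. As this function is decreasing, an upper
bound `t` on the mean suffices. -/
lemma jensen_rpow {q t : ℝ} (hq : q ≤ 0) (ht : 0 < t) (m : ℕ) (x : ℕ → ℝ)
    (hx : ∀ i ∈ Finset.range m, 0 < x i) (hsum : ∑ i ∈ Finset.range m, x i ≤ m * t) :
    m * t ^ q ≤ ∑ i ∈ Finset.range m, x i ^ q := by
  have h1 : ∑ i ∈ Finset.range m, t ^ q * (1 + q * (x i / t - 1))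
      = t ^ q * (m + q * ((∑ i ∈ Finset.range m, x i) / t - m)) := by
    rw [← Finset.mul_sum, Finset.sum_add_distrib, ← Finset.mul_sum, Finset.sum_sub_distrib,
      ← Finset.sum_div]
    simp
  have h2 : (∑ i ∈ Finset.range m, x i) / t - m ≤ 0 := by
    rw [sub_nonpos, div_le_iff₀ ht]
    exact hsum
  have h3 : 0 ≤ q * ((∑ i ∈ Finset.range m, x i) / t - m) := mul_nonneg_of_nonpos_of_nonpos hq h2
  calc m * t ^ q ≤ t ^ q * (m + q * ((∑ i ∈ Finset.range m, x i) / t - m)) := by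
        have : 0 ≤ t ^ q := (Real.rpow_pos_of_pos ht q).le
        nlinarith
    _ ≤ _ := by
        rw [← h1]
        exact Finset.sum_le_sum fun i hi => tangent_rpow hq (hx i hi) ht

lemma pair_lower {q a b : ℝ} (hq : q ≤ 0) (ha : 0 < a) (hb : 0 < b) :
    2 * ((2 : ℝ) ^ (-q) - 1) * (a + b) ^ q ≤ a ^ q + b ^ q - 2 * (a + b) ^ q := by
  have ht : 0 < (a + b) / 2 := by positivity
  have h1 := tangent_rpow hq ha ht
  have h2 := tangent_rpow hq hb ht
  have h3 : a / ((a + b) / 2) - 1 = -(b / ((a + b) / 2) - 1) := by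
    field_simp
    ring
  have h4 : ((a + b) / 2) ^ q = (2 : ℝ) ^ (-q) * (a + b) ^ q := by
    rw [Real.div_rpow (by positivity) (by norm_num), Real.rpow_neg (by norm_num)]
    ring
  rw [h3] at h1
  rw [h4] at h1 h2
  linarith

lemma energy_lower {p : ℝ} (hp : 1 < p) {m : ℕ} (hm : 1 ≤ m) (ℓ : ℕ → ℝ)
    (hpos : ∀ i ∈ Finset.range (m + 1), 0 < ℓ i)
    (hsum : ∑ i ∈ Finset.range (m + 1), ℓ i = 1) :
    2 / (p - 1) * (1 - (2 : ℝ) ^ (1 - p)) * (m : ℝ) ^ p ≤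
      (1 / (p - 1)) * ∑ i ∈ Finset.range m,
        (ℓ i ^ (1 - p) + ℓ (i + 1) ^ (1 - p) - 2 * (ℓ i + ℓ (i + 1)) ^ (1 - p)) := by
  have hq : 1 - p ≤ 0 := by linarith
  have hm0 : (0 : ℝ) < m := by exact_mod_cast hm
  have hl : ∀ i ∈ Finset.range m, 0 < ℓ i := fun i hi =>
    hpos i (by simp only [Finset.mem_range] at hi ⊢; omega)
  have hr : ∀ i ∈ Finset.range m, 0 < ℓ (i + 1) := fun i hi =>
    hpos (i + 1) (by simp only [Finset.mem_range] at hi ⊢; omega)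
  have hS : ∑ i ∈ Finset.range m, (ℓ i + ℓ (i + 1)) ≤ m * (2 / (m : ℝ)) := by
    rw [Finset.sum_add_distrib, mul_div_cancel₀ _ hm0.ne']
    have e1 := Finset.sum_range_succ ℓ m
    have e2 := Finset.sum_range_succ' ℓ m
    have e3 := hpos 0 (by simp)
    have e4 := hpos m (by simp)
    linarith
  have hJ := jensen_rpow hq (by positivity : 0 < 2 / (m : ℝ)) m (fun i => ℓ i + ℓ (i + 1))
    (fun i hi => add_pos (hl i hi) (hr i hi)) hS
  have hP := Finset.sum_le_sum fun i hi => pair_lower hq (hl i hi) (hr i hi)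
  rw [← Finset.mul_sum] at hP
  have hc : 0 ≤ 2 * ((2 : ℝ) ^ (-(1 - p)) - 1) := by
    have := Real.one_le_rpow (x := 2) (z := -(1 - p)) (by norm_num) (by linarith)
    linarith
  have h2 : (2 : ℝ) ^ (-(1 - p)) * 2 ^ (1 - p) = 1 := by
    rw [← Real.rpow_add (by norm_num)]
    simp
  have hmp : (m : ℝ) * (2 / (m : ℝ)) ^ (1 - p) = 2 ^ (1 - p) * (m : ℝ) ^ p := by
    have : (m : ℝ) ^ p = m * (m : ℝ) ^ (-(1 - p)) := by
      rw [← Real.rpow_one_add' hm0.le (by linarith)]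
      congr 1
      ring
    rw [this, Real.div_rpow (by norm_num) hm0.le, Real.rpow_neg hm0.le]
    ring
  have hp1 : 0 < p - 1 := by linarith
  calc 2 / (p - 1) * (1 - (2 : ℝ) ^ (1 - p)) * (m : ℝ) ^ p
      = 1 / (p - 1) * (2 * ((2 : ℝ) ^ (-(1 - p)) - 1) * (m * (2 / (m : ℝ)) ^ (1 - p))) := by
        rw [hmp]
        linear_combination (-(2 / (p - 1) * (m : ℝ) ^ p)) * h2
    _ ≤ _ := by
        gcongr
        exact (mul_le_mul_of_nonneg_left hJ hc).trans hP

lemma Inp_lower {p : ℝ} (hp : 1 < p) {m : ℕ} (hm : 1 ≤ m) :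
    2 / (p - 1) * (1 - (2 : ℝ) ^ (1 - p)) * (m : ℝ) ^ p ≤ Inp p (m + 1) := by
  -- The infimum over the empty set would be the junk value `0`, so a competitor is needed.
  refine le_csInf ⟨_, fun _ => 1 / ((m : ℝ) + 1), fun i _ => by positivity, ?_, rfl⟩ ?_
  · simp
    field_simp
  · rintro y ⟨ℓ, hpos, hsum, rfl⟩
    exact energy_lower hp hm ℓ hpos hsum

lemma Inp_upper {p : ℝ} (hp : 1 < p) {m : ℕ} (hm : 1 ≤ m) :
    Inp p (m + 1) ≤
      2 / (p - 1) * (1 - (2 : ℝ) ^ (1 - p)) * (m * ((m : ℝ) + 1) ^ (p - 1)) := by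
  refine csInf_le ⟨2 / (p - 1) * (1 - (2 : ℝ) ^ (1 - p)) * (m : ℝ) ^ p, ?_⟩
    ⟨fun _ => 1 / ((m : ℝ) + 1), fun i _ => by positivity, ?_, ?_⟩
  · rintro y ⟨ℓ, hpos, hsum, rfl⟩
    exact energy_lower hp hm ℓ hpos hsum
  · simp
    field_simp
  · have hM : (0 : ℝ) < (m : ℝ) + 1 := by positivity
    have h1 : (1 / ((m : ℝ) + 1)) ^ (1 - p) = ((m : ℝ) + 1) ^ (p - 1) := by
      rw [one_div, Real.inv_rpow hM.le, ← Real.rpow_neg hM.le]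
      congr 1
      ring
    have h2 : (1 / ((m : ℝ) + 1) + 1 / ((m : ℝ) + 1)) ^ (1 - p)
        = 2 ^ (1 - p) * ((m : ℝ) + 1) ^ (p - 1) := by
      rw [← two_mul, Real.mul_rpow (by norm_num) (by positivity), h1]
    simp only [h1, h2, Finset.sum_const, Finset.card_range, nsmul_eq_mul, Nat.add_sub_cancel]
    ring

/-- asymptotics of the minimum problems for `φ_1` and `p > 1`. -/
theorem asymptotics_Inp (p : ℝ) (hp : 1 < p) :
    Tendsto (fun n : ℕ => Inp p n / (n : ℝ) ^ p) atTop
      (𝓝 (2 / (p - 1) * (1 - (2 : ℝ) ^ (1 - p)))) := by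
  rw [← tendsto_add_atTop_iff_nat 1]
  set C := 2 / (p - 1) * (1 - (2 : ℝ) ^ (1 - p)) with hC
  have hlim : Tendsto (fun m : ℕ => (m : ℝ) / ((m : ℝ) + 1)) atTop (𝓝 1) :=
    tendsto_natCast_div_add_atTop 1
  have hlow : Tendsto (fun m : ℕ => C * ((m : ℝ) / ((m : ℝ) + 1)) ^ p) atTop (𝓝 C) := by
    simpa using (hlim.rpow_const (p := p) (Or.inl one_ne_zero)).const_mul C
  have hupp : Tendsto (fun m : ℕ => C * ((m : ℝ) / ((m : ℝ) + 1))) atTop (𝓝 C) := by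
    simpa using hlim.const_mul C
  refine tendsto_of_tendsto_of_tendsto_of_le_of_le' hlow hupp ?_ ?_
  · filter_upwards [eventually_ge_atTop 1] with m hm
    rw [Nat.cast_add_one, Real.div_rpow (by positivity) (by positivity), ← mul_div_assoc]
    gcongr
    exact Inp_lower hp hm
  · filter_upwards [eventually_ge_atTop 1] with m hm
    have hM : (0 : ℝ) < (m : ℝ) + 1 := by positivity
    rw [Nat.cast_add_one, div_le_iff₀ (by positivity)]
    refine (Inp_upper hp hm).trans_eq ?_
    rw [← hC, Real.rpow_sub_one hM.ne']
    field_simp
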